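/- Let F be a maximal hke collection and let x, y be two distinct elements of ⋃F. Then x ≈ y (i.e., there exist A, D ∈ F with A − D = {x} and D − A = {y}) if and only if for every B ∈ F, x ∈ B holds exactly when y ∉ B. -/

import Mathlib

open Finset

/-- The union of a finite collection of finite sets. -/
def famUnion (Γ : Finset (Finset ℕ)) : Finset ℕ := Γ.sup id

/-- The intersection of a finite collection of finite sets
(equal to the usual intersection when the collection is nonempty). -/
def famInter (Γ : Finset (Finset ℕ)) : Finset ℕ :=
  (Γ.sup id).filter (fun x => ∀ A ∈ Γ, x ∈ A)

/-- `F` is a hereditary König–Egerváry (hke) collection with `α(F) = α`: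
`α` is a positive integer and `|⋃Γ| + |⋂Γ| = 2α` for every nonempty subcollection `Γ` of `F`. -/
def IsHKE (F : Finset (Finset ℕ)) (α : ℕ) : Prop :=
  0 < α ∧ ∀ Γ ⊆ F, Γ.Nonempty → (famUnion Γ).card + (famInter Γ).card = 2 * α

/-- `F` is a maximal hke collection: it is an hke collection and no collection
properly containing it is an hke collection. -/
def IsMaxHKE (F : Finset (Finset ℕ)) : Prop :=
  (∃ α, IsHKE F α) ∧ ∀ F' : Finset (Finset ℕ), F ⊂ F' → ¬ ∃ β, IsHKE F' β

/-- The relation `≈` on `⋃F`: `x ≈ y` iff `x = y` or there are `A, D ∈ F`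
with `A − D = {x}` and `D − A = {y}`. -/
def ApproxRel (F : Finset (Finset ℕ)) (x y : ℕ) : Prop :=
  x = y ∨ ∃ A ∈ F, ∃ D ∈ F, A \ D = {x} ∧ D \ A = {y}

lemma mem_famUnion {Γ : Finset (Finset ℕ)} {z : ℕ} : z ∈ famUnion Γ ↔ ∃ A ∈ Γ, z ∈ A := by
  simp [famUnion, Finset.mem_sup]

lemma mem_famInter {Γ : Finset (Finset ℕ)} (h : Γ.Nonempty) {z : ℕ} :
    z ∈ famInter Γ ↔ ∀ A ∈ Γ, z ∈ A := by
  obtain ⟨A, hA⟩ := h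
  simp only [famInter, mem_filter, Finset.mem_sup, id]
  exact ⟨fun h => h.2, fun h => ⟨⟨A, hA, h A hA⟩, h⟩⟩

lemma card_split (S : Finset ℕ) {x y : ℕ} (hxy : x ≠ y) :
    S.card = (S \ {x, y}).card + ((if x ∈ S then 1 else 0) + (if y ∈ S then 1 else 0)) := by
  rw [← card_sdiff_add_card_inter S {x, y}]
  congr 1
  by_cases hx : x ∈ S <;> by_cases hy : y ∈ S <;>
    simp [hx, hy, hxy, inter_insert_of_mem, inter_insert_of_notMem]

/-- in a maximal hke collection `F`, for distinct `x, y ∈ ⋃F`, `x ≈ y` iff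
for every `B ∈ F`, `x ∈ B` exactly when `y ∉ B`. -/
theorem approxRel_iff_complementary (F : Finset (Finset ℕ)) (h : IsMaxHKE F)
    (x y : ℕ) (hx : x ∈ famUnion F) (hy : y ∈ famUnion F) (hxy : x ≠ y) :
    ApproxRel F x y ↔ ∀ B ∈ F, (x ∈ B ↔ y ∉ B) := by
  obtain ⟨⟨α, hα, hF⟩, hmax⟩ := h
  constructor
  · rintro (h | ⟨A, hA, D, hD, hAD, hDA⟩)
    · exact absurd h hxy
    intro B hB
    have e1 : ∀ z, (z ∈ A ∧ z ∉ D) ↔ z = x := fun z => by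
      rw [← mem_sdiff, hAD, mem_singleton]
    have e2 : ∀ z, (z ∈ D ∧ z ∉ A) ↔ z = y := fun z => by
      rw [← mem_sdiff, hDA, mem_singleton]
    have h1 := hF {A, B} (by intro z; simp; rintro (rfl | rfl) <;> assumption) (by simp)
    have h2 := hF {A, D, B} (by intro z; simp; rintro (rfl | rfl | rfl) <;> assumption) (by simp)
    have hxA := (e1 x).2 rfl
    have hyD := (e2 y).2 rfl
    rw [card_split _ hxy, card_split (famInter _) hxy] at h1 h2
    have e3 : ∀ z, ¬ (z = x ∨ z = y) → (z ∈ A ↔ z ∈ D) := by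
      intro z hz
      exact ⟨fun ha => by_contra fun hd => hz (Or.inl ((e1 z).1 ⟨ha, hd⟩)),
        fun ha => by_contra fun hd => hz (Or.inr ((e2 z).1 ⟨ha, hd⟩))⟩
    clear e1 e2
    have s1 : famUnion {A, B} \ {x, y} = famUnion {A, D, B} \ {x, y} := by
      ext z
      simp only [mem_sdiff, mem_famUnion, mem_insert, mem_singleton, exists_eq_or_imp,
        exists_eq_left]
      refine and_congr_left fun hz => ?_
      rw [e3 z hz]
      simp
    have s2 : famInter {A, B} \ {x, y} = famInter {A, D, B} \ {x, y} := by
      ext z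
      simp only [mem_sdiff, mem_famInter (insert_nonempty _ _), mem_insert, mem_singleton,
        forall_eq_or_imp, forall_eq]
      refine and_congr_left fun hz => ?_
      rw [e3 z hz]
      simp
    rw [s1, s2] at h1
    simp only [mem_famUnion, mem_famInter (insert_nonempty _ _), mem_insert, mem_singleton,
        forall_eq_or_imp, forall_eq, exists_eq_or_imp, exists_eq_left, hxA.1, hxA.2, hyD.1,
        hyD.2] at h1 h2
    by_cases c1 : x ∈ B <;> by_cases c2 : y ∈ B <;> simp [c1, c2] at h1 h2 ⊢ <;> omega
  · intro hc
    right
    obtain ⟨B, hB, hxB⟩ := mem_famUnion.1 hx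
    have hyB := (hc B hB).1 hxB
    set D := insert y (B.erase x) with hDdef
    have memD : ∀ z, z ∈ D ↔ z = y ∨ (z ≠ x ∧ z ∈ B) := by simp [hDdef]
    refine ⟨B, hB, D, ?_, ?_, ?_⟩
    · by_contra hDF
      refine hmax (insert D F) (ssubset_insert hDF) ⟨α, hα, ?_⟩
      intro Γ hΓ hne
      by_cases hDΓ : D ∈ Γ
      swap
      · exact hF Γ ((subset_insert_iff_of_notMem hDΓ).1 hΓ) hne
      obtain ⟨G, hG⟩ : ∃ G, G = Γ.erase D := ⟨_, rfl⟩
      have hGF : G ⊆ F := by rw [hG]; exact subset_insert_iff.1 hΓ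
      have hΓG : Γ = insert D G := by rw [hG, insert_erase hDΓ]
      rw [hΓG, ← hF (insert B G) (insert_subset hB hGF) (insert_nonempty _ _)]
      have s1 : famUnion (insert D G) \ {x, y} = famUnion (insert B G) \ {x, y} := by
        ext z
        simp only [mem_sdiff, mem_famUnion, mem_insert, mem_singleton, exists_eq_or_imp, memD]
        clear hF hmax hc
        grind
      have s2 : famInter (insert D G) \ {x, y} = famInter (insert B G) \ {x, y} := by
        ext z
        simp only [mem_sdiff, mem_famInter (insert_nonempty _ _), mem_insert, mem_singleton,
          forall_eq_or_imp, memD]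
        clear hF hmax hc
        grind
      rw [card_split (famUnion (insert D G)) hxy, card_split (famInter (insert D G)) hxy,
        card_split (famUnion (insert B G)) hxy, card_split (famInter (insert B G)) hxy, s1, s2]
      have p1 : (∃ A ∈ G, y ∈ A) ↔ ¬ ∀ A ∈ G, x ∈ A := by
        push Not
        exact exists_congr fun A => and_congr_right fun hA => by
          rw [hc A (hGF hA), not_not]
      have p2 : (∃ A ∈ G, x ∈ A) ↔ ¬ ∀ A ∈ G, y ∈ A := by
        push Not
        exact exists_congr fun A => and_congr_right fun hA => hc A (hGF hA)
      simp only [mem_famUnion, mem_famInter (insert_nonempty _ _), mem_insert,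
        forall_eq_or_imp, exists_eq_or_imp, memD, p1, p2]
      have k : ∀ (P : Prop) [Decidable P], (if P then 1 else 0) + (if ¬ P then 1 else 0) = 1 := by
        intro P _
        by_cases hP : P <;> simp [hP]
      have k1 := k (∀ A ∈ G, x ∈ A)
      have k2 := k (∀ A ∈ G, y ∈ A)
      simp only [hxB, hyB, hxy, ne_eq, not_true_eq_false, false_and, or_false, false_or, true_or,
        true_and, if_true, if_false]
      omega
    · ext z
      simp only [mem_sdiff, memD, mem_singleton]
      constructor
      · clear hF hmax hc; grind
      · rintro rfl; clear hF hmax hc; grind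
    · ext z
      simp only [mem_sdiff, memD, mem_singleton]
      constructor
      · clear hF hmax hc; grind
      · rintro rfl; clear hF hmax hc; grind
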